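/- arXiv:1703.05960 — 3 statements merged into one kernel-verified Lean document; each statement's English description precedes it below -/
import Mathlib

section
/- Let w be a double occurrence word on an n-element set V and let G = I(w) be its interlacement graph. Then: (a) the entrywise mod-2 reduction of the integer matrix IAS_w equals IAS(G); and (b) for every field F and every subtransversal S of W(G), the rank over F of the columns of the image in F of IAS_w indexed by S equals the rank over GF(2) of the columns of IAS(G) indexed by S. In particular, Z₃(G) is strictly representable over every field. -/
open Matrix

noncomputable section

/-- The rank over `F` of the set of columns of `M` indexed by `S`. -/
def colSpanRank (F : Type*) [Field F] {m n : Type*} (M : Matrix m n F) (S : Set n) : ℕ :=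
  Module.finrank F ↥(Submodule.span F ((fun j i => M i j) '' S))

/-- A subtransversal of `W(G) = V × {φ,χ,ψ}`: at most one element of each triple. -/
def Subtransversal3 {V : Type*} (S : Set (V × Fin 3)) : Prop :=
  ∀ v i j, (v, i) ∈ S → (v, j) ∈ S → i = j

/-- The matrix `IAS(G) = (I | A | I + A)` over GF(2); the columns `(v,0)`, `(v,1)`,
`(v,2)` are `φ_G(v)`, `χ_G(v)`, `ψ_G(v)` respectively. -/
def IASmat {V : Type*} [DecidableEq V] (A : Matrix V V (ZMod 2)) :
    Matrix V (V × Fin 3) (ZMod 2) :=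
  Matrix.of fun v p =>
    if p.2 = 0 then (if v = p.1 then 1 else 0)
    else if p.2 = 1 then A v p.1
    else (if v = p.1 then 1 else 0) + A v p.1

/-- `w` is a double occurrence word on `V`: each element of `V` occurs exactly twice. -/
def IsDOW {V : Type*} [DecidableEq V] (w : List V) : Prop := ∀ v : V, w.count v = 2

/-- Distinct `u` and `v` are interlaced in `w`: their occurrences appear in the order
`u v u v` or `v u v u`. -/
def Interlaced {V : Type*} (w : List V) (u v : V) : Prop :=
  [u, v, u, v].Sublist w ∨ [v, u, v, u].Sublist w

open Classical in
/-- The adjacency matrix over GF(2) of the interlacement graph `I(w)`. -/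
def interMat {V : Type*} [DecidableEq V] (w : List V) : Matrix V V (ZMod 2) :=
  Matrix.of fun u v => if u ≠ v ∧ Interlaced w u v then 1 else 0

/-- The position of the first occurrence `v⁻` of `v` in `w`. -/
def fstIdx {V : Type*} [DecidableEq V] (w : List V) (v : V) : ℕ :=
  w.findIdx (fun x => decide (x = v))

/-- The position of the second occurrence `v⁺` of `v` in `w`. -/
def sndIdx {V : Type*} [DecidableEq V] (w : List V) (v : V) : ℕ :=
  fstIdx w v + 1 + (w.drop (fstIdx w v + 1)).findIdx (fun x => decide (x = v))

/-- Position `k` lies in the interior of `v` in `w`, i.e. strictly between `v⁻` and `v⁺`. -/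
def inInterior {V : Type*} [DecidableEq V] (w : List V) (v : V) (k : ℕ) : Prop :=
  fstIdx w v < k ∧ k < sndIdx w v

instance {V : Type*} [DecidableEq V] (w : List V) (v : V) (k : ℕ) :
    Decidable (inInterior w v k) := by unfold inInterior; infer_instance

/-- The integer matrix `IAS_w = (I | A | B)` associated with a double occurrence word `w`;
the columns `(u,0)`, `(u,1)`, `(u,2)` are the `φ`, `χ`, `ψ` columns of `u`. -/
def IASword {V : Type*} [DecidableEq V] (w : List V) : Matrix V (V × Fin 3) ℤ :=
  Matrix.of fun v p =>
    if p.2 = 0 then (if v = p.1 then 1 else 0)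
    else if p.2 = 1 then
      (if v = p.1 then 0 else
        (if inInterior w v (sndIdx w p.1) then 1 else 0)
          - (if inInterior w v (fstIdx w p.1) then 1 else 0))
    else
      (if v = p.1 then 1 else
        (if inInterior w v (fstIdx w p.1) then 1 else 0)
          + (if inInterior w v (sndIdx w p.1) then 1 else 0))


/-- incidence matrix -/
def incM (F : Type*) [Field F] {E X : Type*} [DecidableEq X] (t h : E → X) : Matrix X E F :=
  Matrix.of fun r e => (if r = t e then 1 else 0) - (if r = h e then 1 else 0)

lemma finrank_potentials (F : Type*) [Field F] {E X : Type*} [Fintype E] [Fintype X]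
    [DecidableEq X] (t h : E → X) :
    Module.finrank F (LinearMap.ker (incM F t h)ᵀ.mulVecLin)
      = Nat.card (Quot (fun a b : X => ∃ e, a = t e ∧ b = h e)) := by
  have hmem : ∀ f : X → F, f ∈ LinearMap.ker (incM F t h)ᵀ.mulVecLin ↔
      ∀ e, f (t e) = f (h e) := by
    intro f
    rw [LinearMap.mem_ker, funext_iff]
    refine forall_congr' fun e => ?_
    simp [incM, Matrix.vecMul, dotProduct, mul_sub, sub_eq_zero]
  let r := (fun a b : X => ∃ e, a = t e ∧ b = h e)
  let Φ : LinearMap.ker (incM F t h)ᵀ.mulVecLin ≃ₗ[F] (Quot r → F) :=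
    { toFun := fun f => Quot.lift f.1 (by
        rintro a b ⟨e, rfl, rfl⟩
        exact (hmem f.1).1 f.2 e)
      map_add' := by
        intro f g; ext q; induction q using Quot.ind; rfl
      map_smul' := by
        intro c f; ext q; induction q using Quot.ind; rfl
      invFun := fun g => ⟨fun x => g (Quot.mk r x), (hmem _).2 fun e => by
        congr 1; exact Quot.sound ⟨e, rfl, rfl⟩⟩
      left_inv := fun f => rfl
      right_inv := by
        intro g; ext q; induction q using Quot.ind; rfl }
  have : Finite (Quot r) := Quot.finite r
  have := Fintype.ofFinite (Quot r)
  rw [Φ.finrank_eq, Module.finrank_fintype_fun_eq_card, Nat.card_eq_fintype_card]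

lemma finrank_circulations (F : Type*) [Field F] {E X : Type*} [Fintype E] [Fintype X]
    [DecidableEq X] (t h : E → X) :
    Module.finrank F (LinearMap.ker (incM F t h).mulVecLin) + Fintype.card X
      = Fintype.card E + Nat.card (Quot (fun a b : X => ∃ e, a = t e ∧ b = h e)) := by
  classical
  rw [← finrank_potentials F t h]
  have h1 := LinearMap.finrank_range_add_finrank_ker (incM F t h).mulVecLin
  have h2 := LinearMap.finrank_range_add_finrank_ker (incM F t h)ᵀ.mulVecLin
  have h3 := Matrix.rank_transpose (incM F t h)
  rw [Module.finrank_fintype_fun_eq_card] at h1 h2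
  unfold Matrix.rank at h3
  omega

/-- left kernel -/
def leftKer (F : Type*) [Field F] {m n : Type*} [Fintype m] (M : Matrix m n F) (S : Set n) :
    Submodule F (m → F) where
  carrier := {y | ∀ j ∈ S, ∑ v, y v * M v j = 0}
  zero_mem' := by simp
  add_mem' := by
    intro a b ha hb j hj
    simp [add_mul, Finset.sum_add_distrib, ha j hj, hb j hj]
  smul_mem' := by
    intro c a ha j hj
    simp [mul_assoc, ← Finset.mul_sum, ha j hj]

lemma colSpanRank_eq_rank (F : Type*) [Field F] {m n : Type*} [Fintype m] [Fintype n]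
    (M : Matrix m n F) (S : Set n) [Fintype S] :
    colSpanRank F M S = (M.submatrix id (Subtype.val : S → n)).rank := by
  rw [Matrix.rank_eq_finrank_span_cols, colSpanRank, Set.image_eq_range]
  rfl

lemma colSpanRank_add (F : Type*) [Field F] {m n : Type*} [Fintype m] [Fintype n]
    (M : Matrix m n F) (S : Set n) :
    colSpanRank F M S + Module.finrank F (leftKer F M S) = Fintype.card m := by
  classical
  have : Fintype S := Fintype.ofFinite S
  rw [colSpanRank_eq_rank, ← Matrix.rank_transpose]
  have h2 := LinearMap.finrank_range_add_finrank_ker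
    (M.submatrix id (Subtype.val : S → n))ᵀ.mulVecLin
  rw [Module.finrank_fintype_fun_eq_card] at h2
  have : leftKer F M S = LinearMap.ker (M.submatrix id (Subtype.val : S → n))ᵀ.mulVecLin := by
    ext y
    rw [LinearMap.mem_ker, funext_iff]
    simp [leftKer, Matrix.mulVec, dotProduct, mul_comm]
  rw [this]; exact h2

/-- Block of a half-edge: transition type, occurrence (false = first), direction (true = out). -/
def blk (τ : Option (Fin 3)) (c o : Bool) : Bool :=
  match τ with
  | none => false
  | some i => if i = 0 then c else if i = 1 then xor c o else o

/-- tail of an edge -/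
def tailV {V : Type*} {L : ℕ} (pos : V × Bool ≃ Fin L) (τ : V → Option (Fin 3)) :
    Fin (L + 1) → (V × Bool) ⊕ Bool :=
  Fin.cases (Sum.inr false) fun k =>
    Sum.inl ((pos.symm k).1, blk (τ (pos.symm k).1) (pos.symm k).2 true)

/-- head of an edge -/
def headV {V : Type*} {L : ℕ} (pos : V × Bool ≃ Fin L) (τ : V → Option (Fin 3)) :
    Fin (L + 1) → (V × Bool) ⊕ Bool :=
  Fin.lastCases (Sum.inr true) fun k =>
    Sum.inl ((pos.symm k).1, blk (τ (pos.symm k).1) (pos.symm k).2 false)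

lemma sum_tail (F : Type*) [Field F] {V : Type*} [Fintype V] [DecidableEq V] {L : ℕ}
    (pos : V × Bool ≃ Fin L) (τ : V → Option (Fin 3)) (x : Fin (L + 1) → F)
    (r : (V × Bool) ⊕ Bool) :
    ∑ k, (if r = tailV pos τ k then 1 else 0) * x k =
      (if r = Sum.inr false then 1 else 0) * x 0 +
      ∑ v, ((if r = Sum.inl (v, blk (τ v) false true) then 1 else 0) * x (pos (v, false)).succ +
        (if r = Sum.inl (v, blk (τ v) true true) then 1 else 0) * x (pos (v, true)).succ) := by
  rw [Fin.sum_univ_succ, ← pos.sum_comp, Fintype.sum_prod_type]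
  simp only [tailV, Fin.cases_zero, Fin.cases_succ, Equiv.symm_apply_apply, Fintype.sum_bool]
  congr 1
  exact Finset.sum_congr rfl fun v _ => add_comm _ _

lemma sum_head (F : Type*) [Field F] {V : Type*} [Fintype V] [DecidableEq V] {L : ℕ}
    (pos : V × Bool ≃ Fin L) (τ : V → Option (Fin 3)) (x : Fin (L + 1) → F)
    (r : (V × Bool) ⊕ Bool) :
    ∑ k, (if r = headV pos τ k then 1 else 0) * x k =
      (if r = Sum.inr true then 1 else 0) * x (Fin.last L) +
      ∑ v, ((if r = Sum.inl (v, blk (τ v) false false) then 1 else 0)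
            * x (pos (v, false)).castSucc +
        (if r = Sum.inl (v, blk (τ v) true false) then 1 else 0)
            * x (pos (v, true)).castSucc) := by
  rw [Fin.sum_univ_castSucc, ← pos.sum_comp, Fintype.sum_prod_type]
  simp [headV, add_comm]

lemma mem_ker_inc (F : Type*) [Field F] {V : Type*} [Fintype V] [DecidableEq V] {L : ℕ}
    (pos : V × Bool ≃ Fin L) (τ : V → Option (Fin 3)) (x : Fin (L + 1) → F) :
    x ∈ LinearMap.ker (incM F (tailV pos τ) (headV pos τ)).mulVecLin ↔
      x 0 = 0 ∧ x (Fin.last L) = 0 ∧ ∀ v b,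
        (if b = blk (τ v) false true then 1 else 0) * x (pos (v, false)).succ +
        (if b = blk (τ v) true true then 1 else 0) * x (pos (v, true)).succ =
        (if b = blk (τ v) false false then 1 else 0) * x (pos (v, false)).castSucc +
        (if b = blk (τ v) true false then 1 else 0) * x (pos (v, true)).castSucc := by
  have key : ∀ r, ((incM F (tailV pos τ) (headV pos τ)).mulVecLin x) r =
      ∑ k, (if r = tailV pos τ k then 1 else 0) * x k -
      ∑ k, (if r = headV pos τ k then 1 else 0) * x k := by
    intro r
    simp only [incM, Matrix.mulVecLin_apply, Matrix.mulVec, dotProduct, Matrix.of_apply, sub_mul,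
      Finset.sum_sub_distrib]
  rw [LinearMap.mem_ker, funext_iff]
  simp only [key, sum_tail, sum_head]
  have hs : ∀ (v : V) (b : Bool) (g : Bool → V → Bool) (y : V → F) (c : Bool),
      ∑ u, (if (v, b) = (u, g c u) then (1:F) else 0) * y u =
        (if b = g c v then 1 else 0) * y v := by
    intro v b g y c
    rw [Finset.sum_eq_single v]
    · simp
    · intro u _ hu
      rw [if_neg, zero_mul]
      rintro h; exact hu (congrArg Prod.fst h).symm
    · simp
  rw [Sum.forall, Prod.forall, Bool.forall_bool]
  simp only [Sum.inl.injEq, Finset.sum_add_distrib, Pi.zero_apply, reduceCtorEq, if_false,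
    zero_mul, zero_add, Sum.inr.injEq, Finset.sum_const_zero, add_zero, sub_eq_zero]
  simp only [hs _ _ (fun c u => blk (τ u) c true) _ false,
    hs _ _ (fun c u => blk (τ u) c true) _ true,
    hs _ _ (fun c u => blk (τ u) c false) _ false,
    hs _ _ (fun c u => blk (τ u) c false) _ true]
  simp
  tauto

/-- The edge function of a combination of rows. -/
def Tmap (F : Type*) [Field F] {V : Type*} [Fintype V] {L : ℕ}
    (pos : V × Bool ≃ Fin L) : (V → F) →ₗ[F] (Fin (L + 1) → F) where
  toFun y := fun k => ∑ v, y v *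
    (if (pos (v, false)).val < k.val ∧ k.val ≤ (pos (v, true)).val then 1 else 0)
  map_add' := by
    intro a b; ext k; simp only [Pi.add_apply, add_mul, Finset.sum_add_distrib]
  map_smul' := by
    intro a b; ext k
    simp only [Pi.smul_apply, smul_eq_mul, mul_assoc, Finset.mul_sum, RingHom.id_apply]

lemma Tmap_apply (F : Type*) [Field F] {V : Type*} [Fintype V] {L : ℕ}
    (pos : V × Bool ≃ Fin L) (y : V → F) (k : Fin (L + 1)) :
    Tmap F pos y k = ∑ v, y v *
      (if (pos (v, false)).val < k.val ∧ k.val ≤ (pos (v, true)).val then 1 else 0) := rfl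

lemma Tmap_zero (F : Type*) [Field F] {V : Type*} [Fintype V] {L : ℕ}
    (pos : V × Bool ≃ Fin L) (y : V → F) : Tmap F pos y 0 = 0 := by
  simp [Tmap_apply]

lemma Tmap_last (F : Type*) [Field F] {V : Type*} [Fintype V] {L : ℕ}
    (pos : V × Bool ≃ Fin L) (y : V → F) : Tmap F pos y (Fin.last L) = 0 := by
  rw [Tmap_apply]
  refine Finset.sum_eq_zero fun v _ => ?_
  rw [if_neg, mul_zero]
  have := (pos (v, true)).isLt
  simp only [Fin.val_last]; omega

lemma Tmap_fst (F : Type*) [Field F] {V : Type*} [Fintype V] {L : ℕ}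
    (pos : V × Bool ≃ Fin L) (hlt : ∀ v, (pos (v, false)).val < (pos (v, true)).val)
    (y : V → F) (u : V) :
    Tmap F pos y (pos (u, false)).succ = Tmap F pos y (pos (u, false)).castSucc + y u := by
  classical
  rw [← sub_eq_iff_eq_add', Tmap_apply, Tmap_apply, ← Finset.sum_sub_distrib,
    Finset.sum_eq_single u]
  · have := hlt u
    rw [if_pos, if_neg] <;> simp <;> omega
  · intro v _ hv
    have h1 : (pos (v, false)).val ≠ (pos (u, false)).val := fun h => hv (by
      have := pos.injective (Fin.ext h); simpa using this)
    have h2 : (pos (v, true)).val ≠ (pos (u, false)).val := fun h => by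
      have := pos.injective (Fin.ext h); simp at this
    rw [← mul_sub]
    simp only [Fin.val_succ, Fin.val_castSucc]
    rw [if_congr (show _ ↔ ((pos (v, false)).val < (pos (u, false)).val ∧
      (pos (u, false)).val ≤ (pos (v, true)).val) by omega) rfl rfl]
    simp
  · simp

lemma Tmap_snd (F : Type*) [Field F] {V : Type*} [Fintype V] {L : ℕ}
    (pos : V × Bool ≃ Fin L) (hlt : ∀ v, (pos (v, false)).val < (pos (v, true)).val)
    (y : V → F) (u : V) :
    Tmap F pos y (pos (u, true)).succ = Tmap F pos y (pos (u, true)).castSucc - y u := by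
  classical
  rw [eq_sub_iff_add_eq', ← eq_sub_iff_add_eq, Tmap_apply, Tmap_apply, ← Finset.sum_sub_distrib,
    Finset.sum_eq_single u]
  · have := hlt u
    rw [if_pos, if_neg] <;> simp <;> omega
  · intro v _ hv
    have h1 : (pos (v, true)).val ≠ (pos (u, true)).val := fun h => hv (by
      have := pos.injective (Fin.ext h); simpa using this)
    have h2 : (pos (v, false)).val ≠ (pos (u, true)).val := fun h => by
      have := pos.injective (Fin.ext h); simp at this
    rw [← mul_sub]
    simp only [Fin.val_succ, Fin.val_castSucc]
    rw [if_congr (show _ ↔ ((pos (v, false)).val < (pos (u, true)).val + 1 ∧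
      (pos (u, true)).val + 1 ≤ (pos (v, true)).val) by omega) rfl rfl]
    simp
  · simp

/-- column condition -/
def colCond {F : Type*} [Field F] {L : ℕ} {V : Type*} (pos : V × Bool ≃ Fin L)
    (x : Fin (L + 1) → F) (u : V) (i : Fin 3) : F :=
  if i = 0 then x (pos (u, false)).succ - x (pos (u, false)).castSucc
  else if i = 1 then x (pos (u, true)).succ - x (pos (u, false)).castSucc
  else x (pos (u, false)).castSucc + x (pos (u, true)).castSucc

lemma Tmap_mem (F : Type*) [Field F] {V : Type*} [Fintype V] [DecidableEq V] {L : ℕ}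
    (pos : V × Bool ≃ Fin L) (hlt : ∀ v, (pos (v, false)).val < (pos (v, true)).val)
    (τ : V → Option (Fin 3)) (y : V → F) :
    Tmap F pos y ∈ LinearMap.ker (incM F (tailV pos τ) (headV pos τ)).mulVecLin ↔
      ∀ u i, τ u = some i → colCond pos (Tmap F pos y) u i = 0 := by
  rw [mem_ker_inc]
  simp only [Tmap_zero, Tmap_last, true_and]
  refine forall_congr' fun u => ?_
  have h1 := Tmap_fst F pos hlt y u
  have h2 := Tmap_snd F pos hlt y u
  unfold colCond
  rw [Bool.forall_bool, h1, h2]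
  rcases hτ : τ u with _ | i
  · simp [blk]
  · fin_cases i <;> simp [blk] <;> grind

lemma ker_eq_map (F : Type*) [Field F] {V : Type*} [Fintype V] [DecidableEq V] {L : ℕ}
    (pos : V × Bool ≃ Fin L) (hlt : ∀ v, (pos (v, false)).val < (pos (v, true)).val)
    (τ : V → Option (Fin 3)) (K : Submodule F (V → F))
    (hK : ∀ y, y ∈ K ↔ ∀ u i, τ u = some i → colCond pos (Tmap F pos y) u i = 0) :
    LinearMap.ker (incM F (tailV pos τ) (headV pos τ)).mulVecLin = K.map (Tmap F pos) := by
  ext x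
  rw [Submodule.mem_map]
  constructor
  · intro hx
    have hx' := (mem_ker_inc F pos τ x).1 hx
    obtain ⟨h0, -, hb⟩ := hx'
    let y : V → F := fun u => x (pos (u, false)).succ - x (pos (u, false)).castSucc
    have hsum : ∀ u, x (pos (u, true)).succ = x (pos (u, true)).castSucc - y u := by
      intro u
      have e0 := hb u false
      have e1 := hb u true
      simp only [y]
      rcases hτ : τ u with _ | i
      · simp [hτ, blk] at e0; grind
      · fin_cases i <;> simp [hτ, blk] at e0 e1 <;> grind
    have hT : Tmap F pos y = x := by
      funext k
      induction k using Fin.induction with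
      | zero => rw [Tmap_zero, h0]
      | succ k ih =>
        obtain ⟨⟨u, c⟩, rfl⟩ := pos.surjective k
        cases c
        · rw [Tmap_fst F pos hlt, ih]; simp [y]
        · rw [Tmap_snd F pos hlt, ih, hsum]
    refine ⟨y, ?_, hT⟩
    rw [hK, ← Tmap_mem F pos hlt, hT]; exact hx
  · rintro ⟨y, hy, rfl⟩
    rw [Tmap_mem F pos hlt]; exact (hK y).1 hy

lemma Tmap_inj (F : Type*) [Field F] {V : Type*} [Fintype V] {L : ℕ}
    (pos : V × Bool ≃ Fin L) (hlt : ∀ v, (pos (v, false)).val < (pos (v, true)).val) :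
    Function.Injective (Tmap F pos) := by
  intro a b h
  funext u
  have h1 := Tmap_fst F pos hlt a u
  have h2 := Tmap_fst F pos hlt b u
  rw [h, h2] at h1
  exact (add_left_cancel h1).symm

lemma finrank_K (F : Type*) [Field F] {V : Type*} [Fintype V] [DecidableEq V] {L : ℕ}
    (pos : V × Bool ≃ Fin L) (hlt : ∀ v, (pos (v, false)).val < (pos (v, true)).val)
    (τ : V → Option (Fin 3)) (K : Submodule F (V → F))
    (hK : ∀ y, y ∈ K ↔ ∀ u i, τ u = some i → colCond pos (Tmap F pos y) u i = 0) :
    Module.finrank F K + Fintype.card ((V × Bool) ⊕ Bool) = Fintype.card (Fin (L + 1)) +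
      Nat.card (Quot (fun a b => ∃ e, a = tailV pos τ e ∧ b = headV pos τ e)) := by
  rw [← finrank_circulations F, ker_eq_map F pos hlt τ K hK,
    (Submodule.equivMapOfInjective (Tmap F pos) (Tmap_inj F pos hlt) K).finrank_eq]

/-! ### Positions in the word -/

lemma exists_idx {V : Type*} [DecidableEq V] {w : List V} (hw : IsDOW w) (v : V) :
    ∃ i j : ℕ, i < j ∧ w[i]? = some v ∧ w[j]? = some v := by
  have h : List.Sublist (List.replicate 2 v) w := List.replicate_sublist_iff.2 (hw v).ge
  obtain ⟨f, hf⟩ := List.sublist_iff_exists_orderEmbedding_getElem?_eq.1 h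
  exact ⟨f 0, f 1, f.lt_iff_lt.2 Nat.one_pos, by rw [← hf]; rfl, by rw [← hf]; rfl⟩

lemma sublist_of_idx3 {V : Type*} {w : List V} {a b c : V} {i j k : ℕ} (hij : i < j) (hjk : j < k)
    (ha : w[i]? = some a) (hb : w[j]? = some b) (hc : w[k]? = some c) : List.Sublist ([a, b, c]) w := by
  obtain ⟨hi, ha⟩ := List.getElem?_eq_some_iff.1 ha
  obtain ⟨hj, hb⟩ := List.getElem?_eq_some_iff.1 hb
  obtain ⟨hk, hc⟩ := List.getElem?_eq_some_iff.1 hc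
  have := List.map_getElem_sublist (l := w) (is := [⟨i, hi⟩, ⟨j, hj⟩, ⟨k, hk⟩])
    (by simp [hij, hjk]; omega)
  simpa [ha, hb, hc] using this

lemma sublist_of_idx4 {V : Type*} {w : List V} {a b c d : V} {i j k l : ℕ} (hij : i < j)
    (hjk : j < k) (hkl : k < l)
    (ha : w[i]? = some a) (hb : w[j]? = some b) (hc : w[k]? = some c) (hd : w[l]? = some d) :
    List.Sublist ([a, b, c, d]) w := by
  obtain ⟨hi, ha⟩ := List.getElem?_eq_some_iff.1 ha
  obtain ⟨hj, hb⟩ := List.getElem?_eq_some_iff.1 hb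
  obtain ⟨hk, hc⟩ := List.getElem?_eq_some_iff.1 hc
  obtain ⟨hl, hd⟩ := List.getElem?_eq_some_iff.1 hd
  have := List.map_getElem_sublist (l := w) (is := [⟨i, hi⟩, ⟨j, hj⟩, ⟨k, hk⟩, ⟨l, hl⟩])
    (by simp [hij, hjk, hkl]; omega)
  simpa [ha, hb, hc, hd] using this

lemma fst_le {V : Type*} [DecidableEq V] {w : List V} {v : V} {k : ℕ} (h : w[k]? = some v) :
    fstIdx w v ≤ k := by
  by_contra hk
  have := List.not_of_lt_findIdx (not_le.1 hk)
  obtain ⟨h1, h2⟩ := List.getElem?_eq_some_iff.1 h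
  simp [h2] at this

lemma fst_get {V : Type*} [DecidableEq V] {w : List V} {v : V} {k : ℕ} (h : w[k]? = some v) :
    w[fstIdx w v]? = some v := by
  have hlt : fstIdx w v < w.length := by
    obtain ⟨h1, h2⟩ := List.getElem?_eq_some_iff.1 h
    exact lt_of_le_of_lt (fst_le h) h1
  have := List.findIdx_getElem (p := fun x => decide (x = v)) (xs := w) (w := hlt)
  rw [List.getElem?_eq_some_iff]
  exact ⟨hlt, of_decide_eq_true this⟩

lemma snd_le {V : Type*} [DecidableEq V] {w : List V} {v : V} {k : ℕ} (hk : fstIdx w v < k)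
    (h : w[k]? = some v) : sndIdx w v ≤ k := by
  have h' : (w.drop (fstIdx w v + 1))[k - (fstIdx w v + 1)]? = some v := by
    rw [List.getElem?_drop, ← h]; congr 1; omega
  have := fst_le h'
  unfold sndIdx
  unfold fstIdx at this ⊢
  unfold fstIdx at hk
  omega

lemma snd_get {V : Type*} [DecidableEq V] {w : List V} {v : V} {k : ℕ} (hk : fstIdx w v < k)
    (h : w[k]? = some v) : w[sndIdx w v]? = some v := by
  have h' : (w.drop (fstIdx w v + 1))[k - (fstIdx w v + 1)]? = some v := by
    rw [List.getElem?_drop, ← h]; congr 1; omega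
  have := fst_get h'
  rw [List.getElem?_drop] at this
  exact this

lemma fst_lt_snd {V : Type*} [DecidableEq V] (w : List V) (v : V) :
    fstIdx w v < sndIdx w v := by
  unfold sndIdx; omega

lemma idx_get {V : Type*} [DecidableEq V] {w : List V} (hw : IsDOW w) (v : V) :
    w[fstIdx w v]? = some v ∧ w[sndIdx w v]? = some v := by
  obtain ⟨i, j, hij, hi, hj⟩ := exists_idx hw v
  exact ⟨fst_get hi, snd_get (lt_of_le_of_lt (fst_le hi) hij) hj⟩

lemma idx_cases {V : Type*} [DecidableEq V] {w : List V} (hw : IsDOW w) {v : V} {k : ℕ}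
    (h : w[k]? = some v) : k = fstIdx w v ∨ k = sndIdx w v := by
  by_contra hc
  push Not at hc
  have h1 := lt_of_le_of_ne (fst_le h) hc.1.symm
  have h2 := lt_of_le_of_ne (snd_le h1 h) hc.2.symm
  obtain ⟨hf, hs⟩ := idx_get hw v
  have h3 : List.Sublist (List.replicate 3 v) w := sublist_of_idx3 (fst_lt_snd w v) h2 hf hs h
  have := List.replicate_sublist_iff.1 h3
  rw [hw v] at this
  omega

lemma sublist4_iff {V : Type*} [DecidableEq V] {w : List V} (hw : IsDOW w) (a b : V) :
    List.Sublist ([a, b, a, b]) w ↔ fstIdx w a < fstIdx w b ∧ fstIdx w b < sndIdx w a ∧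
      sndIdx w a < sndIdx w b := by
  constructor
  · intro h
    obtain ⟨f, hf⟩ := List.sublist_iff_exists_orderEmbedding_getElem?_eq.1 h
    have h01 : f 0 < f 1 := f.lt_iff_lt.2 (by norm_num)
    have h12 : f 1 < f 2 := f.lt_iff_lt.2 (by norm_num)
    have h23 : f 2 < f 3 := f.lt_iff_lt.2 (by norm_num)
    have g0 := idx_cases hw (hf 0).symm
    have g1 := idx_cases hw (hf 1).symm
    have g2 := idx_cases hw (hf 2).symm
    have g3 := idx_cases hw (hf 3).symm
    have := fst_lt_snd w a
    have := fst_lt_snd w b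
    omega
  · rintro ⟨h1, h2, h3⟩
    exact sublist_of_idx4 h1 h2 h3 (idx_get hw a).1 (idx_get hw b).1 (idx_get hw a).2
      (idx_get hw b).2

lemma idx_ne {V : Type*} [DecidableEq V] {w : List V} {a b : V} (hab : a ≠ b) {i j : ℕ}
    (hi : w[i]? = some a) (hj : w[j]? = some b) : i ≠ j := by
  rintro rfl
  rw [hi] at hj
  exact hab (Option.some.inj hj)

/-- Part (a). -/
lemma IASword_mod_two {V : Type*} [DecidableEq V] {w : List V} (hw : IsDOW w) :
    (IASword w).map (Int.cast : ℤ → ZMod 2) = IASmat (interMat w) := by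
  ext v ⟨u, i⟩
  by_cases huv : v = u
  · subst huv
    fin_cases i <;> simp [IASword, IASmat, interMat]
  · have e1 := idx_ne huv (idx_get hw v).1 (idx_get hw u).1
    have e2 := idx_ne huv (idx_get hw v).1 (idx_get hw u).2
    have e3 := idx_ne huv (idx_get hw v).2 (idx_get hw u).1
    have e4 := idx_ne huv (idx_get hw v).2 (idx_get hw u).2
    have l1 := fst_lt_snd w v
    have l2 := fst_lt_snd w u
    have hint : Interlaced w v u ↔
        ¬ (inInterior w v (fstIdx w u) ↔ inInterior w v (sndIdx w u)) := by
      unfold Interlaced inInterior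
      rw [sublist4_iff hw, sublist4_iff hw]
      omega
    have h2 : (1 : ZMod 2) + 1 = 0 := by decide
    rw [one_add_one_eq_two] at h2
    have hm1 : (-1 : ZMod 2) = 1 := by decide
    fin_cases i
    · simp [IASword, IASmat, huv]
    all_goals
      simp only [IASword, IASmat, interMat, Matrix.map_apply, Matrix.of_apply, huv, hint]
      by_cases p : inInterior w v (fstIdx w u) <;> by_cases q : inInterior w v (sndIdx w u) <;>
        simp [p, q, h2, hm1, huv]

/-- positions as an equivalence -/
def posFun {V : Type*} [DecidableEq V] {w : List V} (hw : IsDOW w) (p : V × Bool) :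
    Fin w.length :=
  ⟨if p.2 then sndIdx w p.1 else fstIdx w p.1, by
    obtain ⟨h1, h2⟩ := idx_get hw p.1
    split_ifs
    · exact (List.getElem?_eq_some_iff.1 h2).1
    · exact (List.getElem?_eq_some_iff.1 h1).1⟩

lemma posFun_bij {V : Type*} [DecidableEq V] {w : List V} (hw : IsDOW w) :
    Function.Bijective (posFun hw) := by
  constructor
  · rintro ⟨a, c⟩ ⟨b, d⟩ h
    have h' : (if c then sndIdx w a else fstIdx w a) = (if d then sndIdx w b else fstIdx w b) :=
      congrArg Fin.val h
    have hab : a = b := by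
      by_contra hab
      have e1 := idx_ne hab (idx_get hw a).1 (idx_get hw b).1
      have e2 := idx_ne hab (idx_get hw a).1 (idx_get hw b).2
      have e3 := idx_ne hab (idx_get hw a).2 (idx_get hw b).1
      have e4 := idx_ne hab (idx_get hw a).2 (idx_get hw b).2
      cases c <;> cases d <;> simp at h' <;> omega
    subst hab
    have l1 := fst_lt_snd w a
    cases c <;> cases d <;> simp at h' ⊢ <;> omega
  · intro k
    have hk : w[k.val]? = some w[k.val] := List.getElem?_eq_getElem k.isLt
    rcases idx_cases hw hk with h | h
    · exact ⟨(w[k.val], false), Fin.ext (by simpa [posFun] using h.symm)⟩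
    · exact ⟨(w[k.val], true), Fin.ext (by simpa [posFun] using h.symm)⟩

/-- positions as an equivalence -/
def posEquiv {V : Type*} [DecidableEq V] {w : List V} (hw : IsDOW w) :
    V × Bool ≃ Fin w.length := Equiv.ofBijective _ (posFun_bij hw)

lemma posEquiv_false {V : Type*} [DecidableEq V] {w : List V} (hw : IsDOW w) (v : V) :
    (posEquiv hw (v, false)).val = fstIdx w v := rfl

lemma posEquiv_true {V : Type*} [DecidableEq V] {w : List V} (hw : IsDOW w) (v : V) :
    (posEquiv hw (v, true)).val = sndIdx w v := rfl

lemma pairing (F : Type*) [Field F] {V : Type*} [Fintype V] [DecidableEq V] {w : List V}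
    (hw : IsDOW w) (y : V → F) (u : V) (i : Fin 3) :
    ∑ v, y v * ((IASword w).map (Int.cast : ℤ → F)) v (u, i) =
      colCond (posEquiv hw) (Tmap F (posEquiv hw) y) u i := by
  have hlt : ∀ v, (posEquiv hw (v, false)).val < (posEquiv hw (v, true)).val :=
    fun v => fst_lt_snd w v
  have h1 := Tmap_fst F (posEquiv hw) hlt y u
  have h2 := Tmap_snd F (posEquiv hw) hlt y u
  have hy : y u = ∑ v, y v * (if v = u then 1 else 0) := by simp
  have ne : ∀ v, v ≠ u → sndIdx w v ≠ fstIdx w u ∧ sndIdx w v ≠ sndIdx w u := fun v hv =>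
    ⟨idx_ne hv (idx_get hw v).2 (idx_get hw u).1, idx_ne hv (idx_get hw v).2 (idx_get hw u).2⟩
  unfold colCond
  rw [h1, h2]
  rw [hy, Tmap_apply, Tmap_apply]
  have l2 := fst_lt_snd w u
  fin_cases i
  · simp [IASword]
  · simp only [Fin.mk_one, Fin.isValue, one_ne_zero, if_true, if_false,
      ← Finset.sum_sub_distrib, ← Finset.sum_add_distrib, ← mul_sub, ← mul_add]
    refine Finset.sum_congr rfl fun v _ => ?_
    congr 1
    by_cases hv : v = u
    · subst hv
      simp [IASword, posEquiv_false, posEquiv_true, l2]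
    · obtain ⟨n1, n2⟩ := ne v hv
      have a1 : (fstIdx w v < fstIdx w u ∧ fstIdx w u ≤ sndIdx w v) ↔
          inInterior w v (fstIdx w u) := by unfold inInterior; omega
      have a2 : (fstIdx w v < sndIdx w u ∧ sndIdx w u ≤ sndIdx w v) ↔
          inInterior w v (sndIdx w u) := by unfold inInterior; omega
      simp [IASword, posEquiv_false, posEquiv_true, hv, a1, a2]
  · simp only [Fin.reduceFinMk, Fin.isValue, Fin.reduceEq, if_false,
      ← Finset.sum_sub_distrib, ← Finset.sum_add_distrib, ← mul_sub, ← mul_add]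
    refine Finset.sum_congr rfl fun v _ => ?_
    congr 1
    by_cases hv : v = u
    · subst hv
      simp [IASword, posEquiv_false, posEquiv_true, l2]
    · obtain ⟨n1, n2⟩ := ne v hv
      have a1 : (fstIdx w v < fstIdx w u ∧ fstIdx w u ≤ sndIdx w v) ↔
          inInterior w v (fstIdx w u) := by unfold inInterior; omega
      have a2 : (fstIdx w v < sndIdx w u ∧ sndIdx w u ≤ sndIdx w v) ↔
          inInterior w v (sndIdx w u) := by unfold inInterior; omega
      simp [IASword, posEquiv_false, posEquiv_true, hv, a1, a2]

lemma exists_type {V : Type*} (S : Set (V × Fin 3)) (hS : Subtransversal3 S) :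
    ∃ τ : V → Option (Fin 3), ∀ v i, (v, i) ∈ S ↔ τ v = some i := by
  classical
  refine ⟨fun v => if h : ∃ i, (v, i) ∈ S then some h.choose else none, fun v i => ?_⟩
  by_cases h : ∃ i, (v, i) ∈ S
  · simp only [h, dif_pos, Option.some.injEq]
    exact ⟨fun hi => hS v _ _ h.choose_spec hi, fun e => e ▸ h.choose_spec⟩
  · simp only [h, dif_neg, not_false_eq_true, reduceCtorEq, iff_false]
    exact fun hi => h ⟨i, hi⟩

lemma rank_formula {V : Type*} [Fintype V] [DecidableEq V] {w : List V} (hw : IsDOW w)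
    (S : Set (V × Fin 3)) (hS : Subtransversal3 S) :
    ∃ N : ℕ, ∀ (F : Type) [Field F],
      colSpanRank F ((IASword w).map (Int.cast : ℤ → F)) S = N := by
  obtain ⟨τ, hτ⟩ := exists_type S hS
  refine ⟨Fintype.card V + Fintype.card ((V × Bool) ⊕ Bool) - (Fintype.card (Fin (w.length + 1)) +
    Nat.card (Quot (fun a b => ∃ e, a = tailV (posEquiv hw) τ e ∧ b = headV (posEquiv hw) τ e))),
    fun F _ => ?_⟩
  have h1 := colSpanRank_add F ((IASword w).map (Int.cast : ℤ → F)) S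
  have h2 := finrank_K F (posEquiv hw) (fun v => fst_lt_snd w v) τ
    (leftKer F ((IASword w).map (Int.cast : ℤ → F)) S) (by
      intro y
      have : y ∈ leftKer F ((IASword w).map (Int.cast : ℤ → F)) S ↔
          ∀ j ∈ S, ∑ v, y v * ((IASword w).map (Int.cast : ℤ → F)) v j = 0 := Iff.rfl
      rw [this, Prod.forall]
      refine forall_congr' fun u => forall_congr' fun i => ?_
      rw [pairing F hw, hτ])
  omega

lemma colSpanRank_rows (F : Type*) [Field F] {m m' n : Type*} [Fintype m] [Fintype m']
    [Fintype n] (M : Matrix m n F) (e : m' ≃ m) (S : Set n) :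
    colSpanRank F (M.submatrix e id) S = colSpanRank F M S := by
  classical
  have : Fintype S := Fintype.ofFinite S
  rw [colSpanRank_eq_rank, colSpanRank_eq_rank]
  exact Matrix.rank_submatrix (M.submatrix id (Subtype.val : S → n)) e (Equiv.refl _)

lemma rank_full (F : Type*) [Field F] {V : Type*} [Fintype V] [DecidableEq V] (w : List V) :
    ((IASword w).map (Int.cast : ℤ → F)).rank = Fintype.card V := by
  apply le_antisymm (Matrix.rank_le_card_height _)
  have h := Matrix.rank_submatrix_le ((IASword w).map (Int.cast : ℤ → F)) id
    (fun v : V => ((v, 0) : V × Fin 3))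
  have h1 : ((IASword w).map (Int.cast : ℤ → F)).submatrix id
    (fun v : V => ((v, 0) : V × Fin 3)) = 1 := by
    ext a b
    simp [IASword, Matrix.one_apply]
  rwa [h1, Matrix.rank_one] at h

/-- For a double occurrence word `w` with interlacement graph `G = I(w)`:
(a) the entrywise mod-2 reduction of the integer matrix `IAS_w` equals `IAS(G)`;
(b) for every field `F` and every subtransversal `S`, the rank over `F` of the
columns of `IAS_w` (mapped into `F`) indexed by `S` equals the rank over GF(2) of
the corresponding columns of `IAS(G)`.  In particular `Z₃(G)` is strictly
representable over every field. -/
theorem IASword_strictly_represents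
    {V : Type} [Fintype V] [DecidableEq V] (w : List V) (hw : IsDOW w) :
    ((IASword w).map (Int.cast : ℤ → ZMod 2) = IASmat (interMat w)) ∧
    (∀ (F : Type) [Field F], ∀ S : Set (V × Fin 3), Subtransversal3 S →
      colSpanRank F ((IASword w).map (Int.cast : ℤ → F)) S
        = colSpanRank (ZMod 2) (IASmat (interMat w)) S) ∧
    (∀ (F : Type) [Field F],
      ∃ (k : ℕ) (P : Matrix (Fin k) (V × Fin 3) F),
        P.rank = Fintype.card V ∧
        ∀ S : Set (V × Fin 3), Subtransversal3 S →
          colSpanRank F P S = colSpanRank (ZMod 2) (IASmat (interMat w)) S) := by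
  have hb : ∀ (F : Type) [Field F], ∀ S : Set (V × Fin 3), Subtransversal3 S →
      colSpanRank F ((IASword w).map (Int.cast : ℤ → F)) S
        = colSpanRank (ZMod 2) (IASmat (interMat w)) S := by
    intro F _ S hS
    obtain ⟨N, hN⟩ := rank_formula hw S hS
    rw [← IASword_mod_two hw, hN F, hN (ZMod 2)]
  refine ⟨IASword_mod_two hw, hb, fun F _ => ?_⟩
  refine ⟨Fintype.card V, ((IASword w).map (Int.cast : ℤ → F)).submatrix
    (Fintype.equivFin V).symm id, ?_, fun S hS => ?_⟩
  · exact (Matrix.rank_submatrix _ (Fintype.equivFin V).symm (Equiv.refl _)).trans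
      (rank_full F w)
  · rw [colSpanRank_rows, hb F S hS]
end
end

section
/- Let F be a field, G a looped simple graph such that Z₃(G) is representable (respectively, strictly representable) over F, and H a vertex-minor of G. Then Z₃(H) is representable (respectively, strictly representable) over F. -/
open Matrix

noncomputable section

/-- The isotropic 3-matroid `Z₃(G)` is representable over `F`: some matrix over `F`
with columns indexed by `W(G)` has the same rank as `IAS(G)` on every subtransversal. -/
def Z3Rep (F : Type*) [Field F] {V : Type*} [Fintype V] [DecidableEq V]
    (A : Matrix V V (ZMod 2)) : Prop :=
  ∃ (k : ℕ) (P : Matrix (Fin k) (V × Fin 3) F),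
    ∀ S : Set (V × Fin 3), Subtransversal3 S →
      colSpanRank F P S = colSpanRank (ZMod 2) (IASmat A) S

/-- `Z₃(G)` is strictly representable over `F`: the sheltering matroid has rank `|V(G)|`. -/
def Z3RepStrict (F : Type*) [Field F] {V : Type*} [Fintype V] [DecidableEq V]
    (A : Matrix V V (ZMod 2)) : Prop :=
  ∃ (k : ℕ) (P : Matrix (Fin k) (V × Fin 3) F),
    P.rank = Fintype.card V ∧
    ∀ S : Set (V × Fin 3), Subtransversal3 S →
      colSpanRank F P S = colSpanRank (ZMod 2) (IASmat A) S

/-- Complement the loop status of `v`. -/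
def loopComp {V : Type*} [DecidableEq V] (A : Matrix V V (ZMod 2)) (v : V) :
    Matrix V V (ZMod 2) :=
  Matrix.of fun i j => if i = v ∧ j = v then A i j + 1 else A i j

/-- Simple local complement at `v`: complement the adjacency status of every pair of
distinct neighbors of `v`. -/
def simpleLC {V : Type*} [DecidableEq V] (A : Matrix V V (ZMod 2)) (v : V) :
    Matrix V V (ZMod 2) :=
  Matrix.of fun i j =>
    if i ≠ j ∧ i ≠ v ∧ j ≠ v ∧ A i v = 1 ∧ A j v = 1 then A i j + 1 else A i j

/-- Non-simple local complement at `v`: additionally complement the loop status of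
every neighbor of `v`. -/
def nonsimpleLC {V : Type*} [DecidableEq V] (A : Matrix V V (ZMod 2)) (v : V) :
    Matrix V V (ZMod 2) :=
  Matrix.of fun i j =>
    if i ≠ v ∧ j ≠ v ∧ A i v = 1 ∧ A j v = 1 then A i j + 1 else A i j

/-- One elementary step of local equivalence. -/
def LocStep {V : Type*} [DecidableEq V] (A B : Matrix V V (ZMod 2)) : Prop :=
  ∃ v, B = loopComp A v ∨ B = simpleLC A v ∨ B = nonsimpleLC A v

/-- Local equivalence: the equivalence relation generated by loop complementations
and (simple and non-simple) local complementations. -/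
def LocEquiv {V : Type*} [DecidableEq V] :
    Matrix V V (ZMod 2) → Matrix V V (ZMod 2) → Prop :=
  Relation.EqvGen LocStep


/-- `H` (on vertex type `V'`) is a vertex-minor of `G` (on `V`): `H` is an induced
subgraph of a graph locally equivalent to `G`. -/
def VertexMinor {V V' : Type*} [DecidableEq V] [DecidableEq V']
    (B : Matrix V' V' (ZMod 2)) (A : Matrix V V (ZMod 2)) : Prop :=
  ∃ A' : Matrix V V (ZMod 2), LocEquiv A A' ∧
    ∃ f : V' ↪ V, ∀ u u' : V', B u u' = A' (f u) (f u')

theorem vm_contract {F : Type*} [Field F] {m m' n n' : Type*} [Finite m]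
    (M : Matrix m n F) (M' : Matrix m' n' F) (h : n' → n) (Φ : Set n)
    (g : (m → F) →ₗ[F] (m' → F))
    (hker : LinearMap.ker g = Submodule.span F ((fun j i => M i j) '' Φ))
    (hg : ∀ j, (fun i => M' i j) = g (fun i => M i (h j))) (S : Set n') :
    colSpanRank F M' S + colSpanRank F M Φ = colSpanRank F M (h '' S ∪ Φ) := by
  have e1 : Submodule.span F ((fun j i => M' i j) '' S) =
      Submodule.map g (Submodule.span F ((fun j i => M i j) '' (h '' S ∪ Φ))) := by
    have h0 : Submodule.map g (LinearMap.ker g) = ⊥ := by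
      rw [eq_bot_iff]
      rintro _ ⟨x, hx, rfl⟩
      exact hx
    have h1 : (fun j i => M' i j) = fun j => g (fun i => M i (h j)) := funext hg
    rw [Set.image_union, Submodule.span_union, Submodule.map_sup, ← hker, h0, sup_bot_eq,
      Submodule.map_span, Set.image_image, Set.image_image, h1]
  have hle : LinearMap.ker g ≤ Submodule.span F ((fun j i => M i j) '' (h '' S ∪ Φ)) := by
    rw [hker]
    exact Submodule.span_mono (Set.image_mono Set.subset_union_right)
  unfold colSpanRank
  rw [e1, ← hker]
  generalize Submodule.span F ((fun j i => M i j) '' (h '' S ∪ Φ)) = W at hle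
  have := (g.domRestrict W).finrank_range_add_finrank_ker
  rw [LinearMap.range_domRestrict, LinearMap.ker_domRestrict] at this
  rw [← this, (Submodule.comapSubtypeEquivOfLe hle).finrank_eq]

def vmMap {V : Type*} (σ : V → Equiv.Perm (Fin 3)) : V × Fin 3 → V × Fin 3 :=
  fun p => (p.1, σ p.1 p.2)

theorem vmMap_image_inv {V : Type*} (σ : V → Equiv.Perm (Fin 3)) (S : Set (V × Fin 3)) :
    vmMap σ '' (vmMap (fun v => (σ v)⁻¹) '' S) = S := by
  rw [Set.image_image]
  have : (fun x => vmMap σ (vmMap (fun v => (σ v)⁻¹) x)) = id := by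
    funext x
    simp [vmMap]
  rw [this, Set.image_id]

def VmIso {V : Type*} [DecidableEq V] (A B : Matrix V V (ZMod 2)) : Prop :=
  ∃ σ : V → Equiv.Perm (Fin 3), ∀ S,
    colSpanRank (ZMod 2) (IASmat B) S = colSpanRank (ZMod 2) (IASmat A) (vmMap σ '' S)

theorem VmIso.refl {V : Type*} [DecidableEq V] (A : Matrix V V (ZMod 2)) : VmIso A A :=
  ⟨fun _ => 1, fun S => by
    have : vmMap (fun _ : V => (1 : Equiv.Perm (Fin 3))) = id := rfl
    rw [this, Set.image_id]⟩

theorem VmIso.symm {V : Type*} [DecidableEq V] {A B : Matrix V V (ZMod 2)} (h : VmIso A B) :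
    VmIso B A := by
  obtain ⟨σ, h⟩ := h
  exact ⟨fun v => (σ v)⁻¹, fun S => by rw [h, vmMap_image_inv]⟩

theorem VmIso.trans {V : Type*} [DecidableEq V] {A B C : Matrix V V (ZMod 2)} (h : VmIso A B)
    (h' : VmIso B C) : VmIso A C := by
  obtain ⟨σ, h⟩ := h
  obtain ⟨τ, h'⟩ := h'
  exact ⟨fun v => σ v * τ v, fun S => by rw [h', h, Set.image_image]; rfl⟩

theorem vmIso_of_col {V : Type*} [Finite V] [DecidableEq V] {A B : Matrix V V (ZMod 2)}
    (σ : V → Equiv.Perm (Fin 3)) (v : V) (n : V → ZMod 2) (hn : n v = 0)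
    (h : ∀ i w c, IASmat B i (w, c) =
      IASmat A i (w, σ w c) + IASmat A v (w, σ w c) * n i) : VmIso A B := by
  refine ⟨σ, fun S => ?_⟩
  let g : (V → ZMod 2) →ₗ[ZMod 2] (V → ZMod 2) :=
    LinearMap.id + (LinearMap.proj v).smulRight n
  have hgx : ∀ x i, g x i = x i + x v * n i := fun x i => by simp [g]
  have := vm_contract (IASmat A) (IASmat B) (vmMap σ) ∅ g (by
    rw [Set.image_empty, Submodule.span_empty, LinearMap.ker_eq_bot']
    intro x hx
    have hv : x v = 0 := by
      have := congrFun hx v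
      rw [hgx] at this
      simpa [hn] using this
    ext i
    have := congrFun hx i
    rw [hgx] at this
    simpa [hv] using this) (by
    rintro ⟨w, c⟩
    ext i
    rw [hgx, h]
    rfl) S
  have h0 : colSpanRank (ZMod 2) (IASmat A) ∅ = 0 := by
    unfold colSpanRank
    rw [Set.image_empty, Submodule.span_empty, finrank_bot]
  rw [h0, add_zero, Set.union_empty] at this
  exact this

theorem vmIso_loop {V : Type*} [Finite V] [DecidableEq V] (A : Matrix V V (ZMod 2)) (v : V) :
    VmIso A (loopComp A v) := by
  refine vmIso_of_col (fun w => if w = v then Equiv.swap 1 2 else 1) v 0 rfl ?_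
  intro i w c
  simp only [IASmat, loopComp, Matrix.of_apply, Pi.zero_apply, mul_zero, add_zero]
  by_cases hw : w = v
  · subst hw
    by_cases hi : i = w
    · subst hi
      generalize A i i = a
      simp only [if_true, and_self]
      revert a c; decide
    · generalize A i w = a
      simp only [hi, if_true, if_false, false_and]
      revert a c; decide
  · simp [hw]

theorem vmIso_lc {V : Type*} [Finite V] [DecidableEq V] (A B : Matrix V V (ZMod 2))
    (hA : A.IsSymm) (v : V) (s : Bool)
    (hB : ∀ i j, B i j = if (s = true → i ≠ j) ∧ i ≠ v ∧ j ≠ v ∧ A i v = 1 ∧ A j v = 1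
      then A i j + 1 else A i j) :
    VmIso A B := by
  refine vmIso_of_col
    (fun w => if w = v then (if A v v = 0 then Equiv.swap 0 2 else Equiv.swap 0 1)
      else if s = true ∧ A w v = 1 then Equiv.swap 1 2 else 1) v
    (fun i => if i = v then 0 else A i v) (by simp) ?_
  intro i w c
  simp only [IASmat, Matrix.of_apply, hB, ← hA.apply v w]
  by_cases hw : w = v
  · subst hw
    by_cases hi : i = w
    · subst hi
      generalize A i i = a
      simp only [if_true, ne_eq, not_true_eq_false, false_and, and_false, if_false]
      revert a c; decide
    · generalize A i w = a
      generalize A w w = b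
      simp only [hi, if_true, ne_eq, not_true_eq_false, false_and, and_false, if_false]
      revert a b c; decide
  · have hw' : ¬ v = w := fun h => hw h.symm
    by_cases hi : i = v
    · subst hi
      rw [← hA.apply i w]
      generalize A w i = a
      simp only [hw, hw', if_true, ne_eq, not_true_eq_false, false_and, and_false, if_false]
      clear hB
      revert a c s; decide
    · by_cases hiw : i = w
      · subst hiw
        generalize A i i = a
        generalize A i v = b
        simp only [hw, hw', if_true, ne_eq, not_true_eq_false, not_false_eq_true, true_and, if_false]
        clear hB
        revert a b c s; decide
      · generalize A i w = a
        generalize A i v = b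
        generalize A w v = d
        simp only [hw, hw', hi, hiw, if_true, ne_eq, not_false_eq_true, true_and, if_false]
        clear hB
        revert a b c d s; decide

theorem vm_step {V : Type*} [Finite V] [DecidableEq V] (A B : Matrix V V (ZMod 2))
    (h : LocStep A B) : (A.IsSymm ↔ B.IsSymm) ∧ (A.IsSymm → VmIso A B) := by
  have key : ∀ a b : ZMod 2, a + 1 = b + 1 ↔ a = b := by decide
  obtain ⟨v, h | h | h⟩ := h
  · refine ⟨?_, fun _ => h ▸ vmIso_loop A v⟩
    subst h
    simp only [Matrix.IsSymm.ext_iff, loopComp, Matrix.of_apply]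
    refine forall_congr' fun i => forall_congr' fun j => ?_
    by_cases hi : i = v <;> by_cases hj : j = v <;> simp [hi, hj]
  · refine ⟨?_, fun hA => vmIso_lc A B hA v true (by intro i j; simp [h, simpleLC])⟩
    subst h
    simp only [Matrix.IsSymm.ext_iff, simpleLC, Matrix.of_apply]
    refine forall_congr' fun i => forall_congr' fun j => ?_
    by_cases hij : i = j
    · simp [hij]
    have hji : ¬ j = i := fun h => hij h.symm
    by_cases hi : i = v <;> by_cases hj : j = v <;> by_cases h1 : A i v = 1 <;>
      by_cases h2 : A j v = 1 <;> simp [hi, hj, h1, h2, hij, hji]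
  · refine ⟨?_, fun hA => vmIso_lc A B hA v false (by intro i j; simp [h, nonsimpleLC])⟩
    subst h
    simp only [Matrix.IsSymm.ext_iff, nonsimpleLC, Matrix.of_apply]
    refine forall_congr' fun i => forall_congr' fun j => ?_
    by_cases hi : i = v <;> by_cases hj : j = v <;> by_cases h1 : A i v = 1 <;>
      by_cases h2 : A j v = 1 <;> simp [hi, hj, h1, h2]

theorem vm_equiv {V : Type*} [Finite V] [DecidableEq V] (A B : Matrix V V (ZMod 2))
    (h : LocEquiv A B) : (A.IsSymm ↔ B.IsSymm) ∧ (A.IsSymm → VmIso A B) := by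
  induction h with
  | rel A B h => exact vm_step A B h
  | refl A => exact ⟨Iff.rfl, fun _ => VmIso.refl A⟩
  | symm A B _ ih => exact ⟨ih.1.symm, fun hB => (ih.2 (ih.1.2 hB)).symm⟩
  | trans A B C _ _ ih1 ih2 =>
    exact ⟨ih1.1.trans ih2.1, fun hA => (ih1.2 hA).trans (ih2.2 (ih1.1.1 hA))⟩

theorem vm_colrank_univ {F : Type*} [Field F] {m n : Type*} [Fintype n]
    (P : Matrix m n F) : P.rank = colSpanRank F P Set.univ := by
  rw [Matrix.rank_eq_finrank_span_cols, colSpanRank, Set.image_univ]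
  rfl

theorem vm_sub {V : Type*} (σ : V → Equiv.Perm (Fin 3)) {S : Set (V × Fin 3)}
    (hS : Subtransversal3 S) : Subtransversal3 (vmMap σ '' S) := by
  rintro v i j ⟨⟨w, a⟩, ha, h1⟩ ⟨⟨w', b⟩, hb, h2⟩
  simp only [vmMap, Prod.mk.injEq] at h1 h2
  obtain ⟨rfl, rfl⟩ := h1
  obtain ⟨rfl, rfl⟩ := h2
  rw [hS _ _ _ ha hb]

theorem vm_transfer {F : Type*} [Field F] {V : Type*} [Fintype V] [DecidableEq V]
    {A B : Matrix V V (ZMod 2)} (h : VmIso A B) (k : ℕ) (P : Matrix (Fin k) (V × Fin 3) F)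
    (hP : ∀ S : Set (V × Fin 3), Subtransversal3 S →
      colSpanRank F P S = colSpanRank (ZMod 2) (IASmat A) S) :
    ∃ P' : Matrix (Fin k) (V × Fin 3) F, P'.rank = P.rank ∧
      ∀ S : Set (V × Fin 3), Subtransversal3 S →
      colSpanRank F P' S = colSpanRank (ZMod 2) (IASmat B) S := by
  obtain ⟨σ, h⟩ := h
  have e : ∀ S, colSpanRank F (P.submatrix id (vmMap σ)) S = colSpanRank F P (vmMap σ '' S) := by
    intro S
    unfold colSpanRank
    rw [Set.image_image]
    rfl
  refine ⟨P.submatrix id (vmMap σ), ?_, fun S hS => ?_⟩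
  · rw [vm_colrank_univ, vm_colrank_univ, e]
    congr 1
    have := vmMap_image_inv σ Set.univ
    exact Set.eq_univ_of_subset (Set.image_mono (Set.subset_univ _)) this
  · rw [e, h, hP _ (vm_sub σ hS)]

theorem vm_phi_sub {V : Type*} : Subtransversal3 ({p | p.2 = 0} : Set (V × Fin 3)) :=
  fun _ _ _ hi hj => Eq.trans hi (Eq.symm hj)

theorem vm_phi_rank {V : Type*} [Fintype V] [DecidableEq V] (A : Matrix V V (ZMod 2)) :
    colSpanRank (ZMod 2) (IASmat A) {p | p.2 = 0} = Fintype.card V := by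
  unfold colSpanRank
  have : (fun (j : V × Fin 3) i => IASmat A i j) '' {p | p.2 = 0} =
      Set.range (Pi.basisFun (ZMod 2) V) := by
    ext x
    constructor
    · rintro ⟨⟨w, c⟩, hc, rfl⟩
      refine ⟨w, ?_⟩
      simp only [Set.mem_ofPred_eq] at hc
      subst hc
      ext i
      simp [IASmat, Pi.single_apply]
    · rintro ⟨w, rfl⟩
      refine ⟨(w, 0), rfl, ?_⟩
      ext i
      simp [IASmat, Pi.single_apply]
  rw [this, (Pi.basisFun (ZMod 2) V).span_eq, finrank_top, Module.finrank_fintype_fun_eq_card]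

theorem vm_induced {F : Type*} [Field F] {V V' : Type*} [Fintype V] [DecidableEq V]
    [Fintype V'] [DecidableEq V']
    {A : Matrix V V (ZMod 2)} {B : Matrix V' V' (ZMod 2)} (f : V' ↪ V)
    (hf : ∀ u u' : V', B u u' = A (f u) (f u')) (k : ℕ) (P : Matrix (Fin k) (V × Fin 3) F)
    (hP : ∀ S : Set (V × Fin 3), Subtransversal3 S →
      colSpanRank F P S = colSpanRank (ZMod 2) (IASmat A) S) :
    ∃ (k' : ℕ) (P' : Matrix (Fin k') (V' × Fin 3) F),
      (P.rank = Fintype.card V → P'.rank = Fintype.card V') ∧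
      ∀ S : Set (V' × Fin 3), Subtransversal3 S →
      colSpanRank F P' S = colSpanRank (ZMod 2) (IASmat B) S := by
  let Φ : Set (V × Fin 3) := {p | p.2 = 0 ∧ p.1 ∉ Set.range f}
  let h : V' × Fin 3 → V × Fin 3 := fun p => (f p.1, p.2)
  have hΦ : Subtransversal3 Φ := fun v i j hi hj => hi.1.trans hj.1.symm
  have hsub : ∀ S, Subtransversal3 S → Subtransversal3 (h '' S ∪ Φ) := by
    rintro S hS v i j (⟨⟨w, a⟩, ha, h1⟩ | hi) (⟨⟨w', b⟩, hb, h2⟩ | hj)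
    · simp only [h, Prod.mk.injEq] at h1 h2
      obtain ⟨h1, rfl⟩ := h1
      obtain ⟨h2, rfl⟩ := h2
      have : w = w' := f.injective (h1.trans h2.symm)
      subst this
      exact hS _ _ _ ha hb
    · simp only [h, Prod.mk.injEq] at h1
      exact absurd ⟨w, h1.1⟩ hj.2
    · simp only [h, Prod.mk.injEq] at h2
      exact absurd ⟨w', h2.1⟩ hi.2
    · exact hΦ _ _ _ hi hj
  have hall : h '' {p | p.2 = 0} ∪ Φ = {p | p.2 = 0} := by
    ext ⟨w, c⟩
    simp only [Set.mem_union, Set.mem_image, Set.mem_ofPred_eq, h, Φ, Prod.mk.injEq, Prod.exists,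
      Set.mem_range]
    constructor
    · rintro (⟨a, b, hb, -, rfl⟩ | h) 
      · exact hb
      · exact h.1
    · rintro rfl
      by_cases hw : ∃ y, f y = w
      · obtain ⟨y, rfl⟩ := hw
        exact Or.inl ⟨y, 0, rfl, rfl, rfl⟩
      · exact Or.inr ⟨rfl, hw⟩
  -- contraction over GF(2)
  have c2 := vm_contract (IASmat A) (IASmat B) h Φ (LinearMap.funLeft (ZMod 2) (ZMod 2) f) (by
    apply le_antisymm
    · intro x hx
      have hx' : ∀ u, x (f u) = 0 := fun u => congrFun hx u
      rw [← (Pi.basisFun (ZMod 2) V).sum_repr x]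
      refine Submodule.sum_mem _ fun w _ => ?_
      by_cases hw : w ∈ Set.range f
      · obtain ⟨u, rfl⟩ := hw
        simp [hx' u]
      · refine Submodule.smul_mem _ _ (Submodule.subset_span ⟨(w, 0), ⟨rfl, hw⟩, ?_⟩)
        ext i
        simp [IASmat, Pi.single_apply]
    · rw [Submodule.span_le]
      rintro _ ⟨⟨w, c⟩, ⟨hc, hw⟩, rfl⟩
      simp only at hc
      subst hc
      ext u
      have : f u ≠ w := fun h => hw ⟨u, h⟩
      simp [IASmat, LinearMap.funLeft_apply, this]) (by
    rintro ⟨w, c⟩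
    ext u
    simp [IASmat, LinearMap.funLeft_apply, h, hf])
  -- contraction over F
  let Q := Submodule.span F ((fun j i => P i j) '' Φ)
  let b := Module.finBasis F ((Fin k → F) ⧸ Q)
  let g := b.equivFun.toLinearMap ∘ₗ Q.mkQ
  let P' : Matrix (Fin (Module.finrank F ((Fin k → F) ⧸ Q))) (V' × Fin 3) F :=
    Matrix.of fun i j => g (fun i => P i (h j)) i
  have cF := vm_contract P P' h Φ g (by
    rw [LinearEquiv.ker_comp, Submodule.ker_mkQ]) (fun j => rfl)
  have hfin : ∀ S : Set (V' × Fin 3), Subtransversal3 S →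
      colSpanRank F P' S = colSpanRank (ZMod 2) (IASmat B) S := by
    intro S hS
    have h1 := c2 S
    have h2 := cF S
    rw [hP _ hΦ, hP _ (hsub S hS)] at h2
    omega
  refine ⟨_, P', fun hr => ?_, hfin⟩
  rw [vm_colrank_univ] at hr ⊢
  have e1 := cF Set.univ
  have e2 := cF {p | p.2 = 0}
  rw [hall, hP {p | p.2 = 0} vm_phi_sub, vm_phi_rank,
    hfin _ vm_phi_sub, vm_phi_rank] at e2
  have e3 : colSpanRank F P (h '' Set.univ ∪ Φ) ≤ colSpanRank F P Set.univ :=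
    Submodule.finrank_mono (Submodule.span_mono (Set.image_mono (Set.subset_univ _)))
  have e4 : colSpanRank F P' {p | p.2 = 0} ≤ colSpanRank F P' Set.univ :=
    Submodule.finrank_mono (Submodule.span_mono (Set.image_mono (Set.subset_univ _)))
  rw [hfin _ vm_phi_sub, vm_phi_rank] at e4
  omega

/-- If `Z₃(G)` is (strictly) representable over `F` and `H` is a vertex-minor of `G`,
then `Z₃(H)` is (strictly) representable over `F`. -/
theorem Z3_representable_vertex_minor
    {V V' : Type} [Fintype V] [DecidableEq V] [Fintype V'] [DecidableEq V']
    (A : Matrix V V (ZMod 2)) (B : Matrix V' V' (ZMod 2))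
    (hA : A.IsSymm) (hB : B.IsSymm)
    (F : Type) [Field F] (hminor : VertexMinor B A) :
    (Z3Rep F A → Z3Rep F B) ∧ (Z3RepStrict F A → Z3RepStrict F B) := by
  obtain ⟨A', hAA', f, hf⟩ := hminor
  have hiso := (vm_equiv A A' hAA').2 hA
  constructor
  · rintro ⟨k, P, hP⟩
    obtain ⟨P₁, -, hP₁⟩ := vm_transfer hiso k P hP
    obtain ⟨k', P', -, hP'⟩ := vm_induced f hf k P₁ hP₁
    exact ⟨k', P', hP'⟩
  · rintro ⟨k, P, hr, hP⟩
    obtain ⟨P₁, hr₁, hP₁⟩ := vm_transfer hiso k P hP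
    obtain ⟨k', P', hr', hP'⟩ := vm_induced f hf k P₁ hP₁
    exact ⟨k', P', hr' (hr₁.trans hr), hP'⟩
end
end

section
/- Let w be a double occurrence word on an n-element set V, let v ∈ V, and let w' be the double occurrence word obtained from w by reversing the subword strictly between the two occurrences of v. Let π be the permutation of the column index set V×{φ,χ,ψ} that swaps (v,φ) with (v,ψ), swaps (u,χ) with (u,ψ) for every u ≠ v having exactly one occurrence in the interior of v, and fixes all other columns. Then there exist an n×n integer matrix U with det(U) = ±1 (a product of elementary integer row operations: row negations and additions of integer multiples of one row to another) and a diagonal matrix D with diagonal entries ±1 such that IAS_{w'} equals U·(IAS_w with its columns permuted by π)·D. -/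
open Matrix

noncomputable section

/-- The word obtained from `w` by reversing the subword strictly between the two
occurrences of `v`. -/
def reverseInterior {V : Type*} [DecidableEq V] (w : List V) (v : V) : List V :=
  w.take (fstIdx w v + 1)
    ++ ((w.drop (fstIdx w v + 1)).take (sndIdx w v - (fstIdx w v + 1))).reverse
    ++ w.drop (sndIdx w v)

/-- `u` has exactly one occurrence in the interior of `v` in `w`. -/
def exactlyOneIn {V : Type*} [DecidableEq V] (w : List V) (v u : V) : Prop :=
  Xor' (inInterior w v (fstIdx w u)) (inInterior w v (sndIdx w u))

open Classical in
/-- The column permutation: swap `(v,φ) ↔ (v,ψ)`, and `(u,χ) ↔ (u,ψ)` for each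
`u ≠ v` having exactly one occurrence in the interior of `v`; fix all other columns. -/
def najiPerm {V : Type*} [DecidableEq V] (w : List V) (v : V) :
    V × Fin 3 → V × Fin 3 := fun p =>
  if p.1 = v then
    (if p.2 = 0 then (v, 2) else if p.2 = 2 then (v, 0) else p)
  else if exactlyOneIn w v p.1 then
    (if p.2 = 1 then (p.1, 2) else if p.2 = 2 then (p.1, 1) else p)
  else p

lemma dow_idx {V : Type*} [DecidableEq V] (w : List V) (hw : IsDOW w) (u : V) :
    fstIdx w u < sndIdx w u ∧ sndIdx w u < w.length ∧ w[fstIdx w u]? = some u ∧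
    w[sndIdx w u]? = some u ∧
    ∀ k, w[k]? = some u → k = fstIdx w u ∨ k = sndIdx w u := by
  have h2 := hw u
  have hmem : u ∈ w := by
    apply List.count_pos_iff.1; omega
  obtain ⟨l1, l2, rfl, hl1⟩ := List.eq_append_cons_of_mem hmem
  have hc1 : l1.count u = 0 := List.count_eq_zero.2 hl1
  have hc2 : l2.count u = 1 := by
    simp [List.count_append, hc1] at h2; omega
  have hmem2 : u ∈ l2 := by
    apply List.count_pos_iff.1; omega
  obtain ⟨l3, l4, rfl, hl3⟩ := List.eq_append_cons_of_mem hmem2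
  have hc3 : l3.count u = 0 := List.count_eq_zero.2 hl3
  have hl4 : u ∉ l4 := by
    apply List.count_eq_zero.1
    simp [List.count_append, hc3] at hc2; simpa using hc2
  have e : ∀ (l l' : List V), u ∉ l →
      (l ++ u :: l').findIdx (fun x => decide (x = u)) = l.length := by
    intro l l' h
    induction l with
    | nil => simp [List.findIdx_cons]
    | cons a t ih =>
      simp only [List.mem_cons, not_or] at h
      have : a ≠ u := fun h' => h.1 h'.symm
      simp [List.findIdx_cons, this, ih h.2]
  have hf : fstIdx (l1 ++ u :: (l3 ++ u :: l4)) u = l1.length := e _ _ hl1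
  have hs : sndIdx (l1 ++ u :: (l3 ++ u :: l4)) u = l1.length + 1 + l3.length := by
    unfold sndIdx
    rw [hf]
    have : (l1 ++ u :: (l3 ++ u :: l4)).drop (l1.length + 1) = l3 ++ u :: l4 := by
      rw [List.drop_append]; simp
    rw [this, e _ _ hl3]
  rw [hf, hs]
  refine ⟨by omega, by simp; omega, by simp, ?_, ?_⟩
  · rw [List.getElem?_append_right (by omega)]
    rw [show l1.length + 1 + l3.length - l1.length = l3.length + 1 by omega]
    simp
  · intro k hk
    by_contra hcon
    push Not at hcon
    rcases lt_or_gt_of_ne hcon.1 with h | h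
    · rw [List.getElem?_append_left h] at hk
      exact hl1 (List.mem_of_getElem? hk)
    · rw [List.getElem?_append_right (by omega)] at hk
      obtain ⟨m, rfl⟩ : ∃ m, k = l1.length + 1 + m := ⟨k - (l1.length + 1), by omega⟩
      rw [show l1.length + 1 + m - l1.length = m + 1 by omega, List.getElem?_cons_succ] at hk
      have hm : m ≠ l3.length := by rintro rfl; exact hcon.2 rfl
      rcases lt_or_gt_of_ne hm with h' | h'
      · rw [List.getElem?_append_left h'] at hk
        exact hl3 (List.mem_of_getElem? hk)
      · rw [List.getElem?_append_right (by omega)] at hk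
        obtain ⟨m', rfl⟩ : ∃ m', m = l3.length + 1 + m' := ⟨m - (l3.length + 1), by omega⟩
        rw [show l3.length + 1 + m' - l3.length = m' + 1 by omega,
          List.getElem?_cons_succ] at hk
        exact hl4 (List.mem_of_getElem? hk)

/-- Position map. -/
def posMap (p q k : ℕ) : ℕ := if p < k ∧ k < q then p + q - k else k

lemma rev_getElem {V : Type*} (w : List V) (p q : ℕ) (hpq : p < q) (hq : q < w.length) (k : ℕ) :
    (w.take (p + 1) ++ ((w.drop (p + 1)).take (q - (p + 1))).reverse ++ w.drop q)[k]?
      = w[posMap p q k]? := by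
  have L1 : (w.take (p+1)).length = p + 1 := by simp; omega
  have L2 : ((w.drop (p + 1)).take (q - (p + 1))).length = q - (p+1) := by simp; omega
  unfold posMap
  by_cases h1 : k < p + 1
  · rw [if_neg (by omega), List.append_assoc, List.getElem?_append_left (by omega),
      List.getElem?_take, if_pos h1]
  · rw [List.append_assoc, List.getElem?_append_right (by omega), L1]
    by_cases h2 : k < q
    · rw [if_pos (by omega), List.getElem?_append_left (by rw [List.length_reverse]; omega),
        List.getElem?_reverse (by omega), L2, List.getElem?_take, if_pos (by omega),
        List.getElem?_drop]
      congr 1; omega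
    · rw [if_neg (by omega), List.getElem?_append_right (by rw [List.length_reverse]; omega),
        List.length_reverse, L2, List.getElem?_drop]
      congr 1; omega

lemma rev_perm {V : Type*} (w : List V) (p q : ℕ) (hpq : p < q) :
    (w.take (p + 1) ++ ((w.drop (p + 1)).take (q - (p + 1))).reverse ++ w.drop q).Perm w := by
  have h : w = w.take (p+1) ++ (w.drop (p + 1)).take (q - (p + 1)) ++ w.drop q := by
    have h1 := List.take_append_drop (p+1) w
    have h2 := List.take_append_drop (q - (p+1)) (w.drop (p+1))
    rw [List.drop_drop, show p + 1 + (q - (p+1)) = q by omega] at h2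
    rw [List.append_assoc, h2, h1]
  conv_rhs => rw [h]
  exact ((List.reverse_perm _).append_left _).append_right _

lemma rev_dow {V : Type*} [DecidableEq V] (w : List V) (hw : IsDOW w) (v : V) :
    IsDOW (reverseInterior w v) := by
  intro u
  rw [← hw u]
  exact (rev_perm w _ _ (dow_idx w hw v).1).count_eq u

lemma rev_idx {V : Type*} [DecidableEq V] (w : List V) (hw : IsDOW w) (v u : V) :
    fstIdx (reverseInterior w v) u =
      min (posMap (fstIdx w v) (sndIdx w v) (fstIdx w u))
        (posMap (fstIdx w v) (sndIdx w v) (sndIdx w u)) ∧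
    sndIdx (reverseInterior w v) u =
      max (posMap (fstIdx w v) (sndIdx w v) (fstIdx w u))
        (posMap (fstIdx w v) (sndIdx w v) (sndIdx w u)) := by
  obtain ⟨a1, a2, a3, a4, a5⟩ := dow_idx w hw u
  obtain ⟨v1, v2, v3, v4, v5⟩ := dow_idx w hw v
  obtain ⟨b1, b2, b3, b4, b5⟩ := dow_idx _ (rev_dow w hw v) u
  have key := rev_getElem w _ _ v1 v2
  have c3 := a5 _ ((key _).symm.trans b3)
  have c4 := a5 _ ((key _).symm.trans b4)
  generalize fstIdx (reverseInterior w v) u = f at *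
  generalize sndIdx (reverseInterior w v) u = s at *
  clear b3 b4 b5 key a3 a4 a5 v3 v4 v5
  unfold posMap at *
  constructor <;> grind

lemma idx_ne_s11 {V : Type*} [DecidableEq V] (w : List V) (hw : IsDOW w) (u v : V) (h : u ≠ v) :
    fstIdx w u ≠ fstIdx w v ∧ fstIdx w u ≠ sndIdx w v ∧ sndIdx w u ≠ fstIdx w v ∧
    sndIdx w u ≠ sndIdx w v := by
  obtain ⟨a1, a2, a3, a4, a5⟩ := dow_idx w hw u
  obtain ⟨v1, v2, v3, v4, v5⟩ := dow_idx w hw v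
  refine ⟨?_, ?_, ?_, ?_⟩ <;> intro e <;> grind

/-- Row sign. -/
def rowSign {V : Type*} [DecidableEq V] (w : List V) (v x : V) : ℤ :=
  if x = v then -1 else
    if inInterior w v (fstIdx w x) ∧ inInterior w v (sndIdx w x) then -1 else 1

/-- Multiple of row `v` added to row `x`. -/
def rowMul {V : Type*} [DecidableEq V] (w : List V) (v x : V) : ℤ :=
  if x = v then 0 else
    - ((if inInterior w x (fstIdx w v) then 1 else 0)
          + (if inInterior w x (sndIdx w v) then 1 else 0))

/-- Row operation matrix. -/
def rowMat {V : Type*} [DecidableEq V] (w : List V) (v : V) : Matrix V V ℤ :=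
  Matrix.of fun x y => (if x = y then rowSign w v x else 0) + (if v = y then rowMul w v x else 0)

/-- Column signs. -/
def colSign {V : Type*} [DecidableEq V] (w : List V) (v : V) (p : V × Fin 3) : ℤ :=
  if p.1 = v then (if p.2 = 1 then 1 else -1)
  else if p.2 = 0 then rowSign w v p.1
  else if inInterior w v (sndIdx w p.1) then
    (if inInterior w v (fstIdx w p.1) then (if p.2 = 1 then 1 else -1) else -1)
  else 1

lemma rowMat_mul {V : Type*} [Fintype V] [DecidableEq V] {α : Type*} (w : List V) (v : V)
    (M : Matrix V α ℤ) (x : V) (p : α) :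
    (rowMat w v * M) x p = rowSign w v x * M x p + rowMul w v x * M v p := by
  simp [rowMat, Matrix.mul_apply, add_mul, Finset.sum_add_distrib, ite_mul]

lemma rowMat_sq {V : Type*} [Fintype V] [DecidableEq V] (w : List V) (hw : IsDOW w) (v : V) :
    rowMat w v * rowMat w v = 1 := by
  ext x y
  rw [rowMat_mul]
  obtain ⟨v1, -⟩ := dow_idx w hw v
  obtain ⟨x1, -⟩ := dow_idx w hw x
  have key : rowSign w v x = 1 ∨ (rowSign w v x = -1 ∧ rowMul w v x = 0) := by
    unfold rowSign rowMul inInterior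
    by_cases h : x = v
    · simp [h]
    · simp only [h, if_false]
      grind
  have hv : rowSign w v v = -1 := by simp [rowSign]
  have hv' : rowMul w v v = 0 := by simp [rowMul]
  simp only [rowMat, Matrix.of_apply, hv, hv', Matrix.one_apply]
  rcases key with h | ⟨h, h'⟩
  · rw [h]; split_ifs <;> ring
  · rw [h, h']; split_ifs <;> ring

lemma rev_cases {V : Type*} [DecidableEq V] (w : List V) (hw : IsDOW w) (v u : V) (h : u ≠ v) :
    ((¬ inInterior w v (fstIdx w u) ∧ ¬ inInterior w v (sndIdx w u)) ∧
      (sndIdx w u < fstIdx w v ∨ sndIdx w v < fstIdx w u ∨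
        (fstIdx w u < fstIdx w v ∧ sndIdx w v < sndIdx w u)) ∧
      fstIdx (reverseInterior w v) u = fstIdx w u ∧
      sndIdx (reverseInterior w v) u = sndIdx w u) ∨
    ((inInterior w v (fstIdx w u) ∧ inInterior w v (sndIdx w u)) ∧
      (fstIdx w v < fstIdx w u ∧ sndIdx w u < sndIdx w v) ∧
      fstIdx (reverseInterior w v) u + sndIdx w u = fstIdx w v + sndIdx w v ∧
      sndIdx (reverseInterior w v) u + fstIdx w u = fstIdx w v + sndIdx w v) ∨
    ((¬ inInterior w v (fstIdx w u) ∧ inInterior w v (sndIdx w u)) ∧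
      (fstIdx w u < fstIdx w v ∧ fstIdx w v < sndIdx w u ∧ sndIdx w u < sndIdx w v) ∧
      fstIdx (reverseInterior w v) u = fstIdx w u ∧
      sndIdx (reverseInterior w v) u + sndIdx w u = fstIdx w v + sndIdx w v) ∨
    ((inInterior w v (fstIdx w u) ∧ ¬ inInterior w v (sndIdx w u)) ∧
      (fstIdx w v < fstIdx w u ∧ fstIdx w u < sndIdx w v ∧ sndIdx w v < sndIdx w u) ∧
      fstIdx (reverseInterior w v) u + fstIdx w u = fstIdx w v + sndIdx w v ∧
      sndIdx (reverseInterior w v) u = sndIdx w u) := by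
  obtain ⟨v1, -⟩ := dow_idx w hw v
  obtain ⟨u1, -⟩ := dow_idx w hw u
  obtain ⟨r1, r2⟩ := rev_idx w hw v u
  have n := idx_ne_s11 w hw u v h
  rw [r1, r2]
  unfold inInterior posMap
  clear r1 r2
  generalize fstIdx w u = a at *
  generalize sndIdx w u = b at *
  generalize fstIdx w v = p at *
  generalize sndIdx w v = q at *
  clear h hw
  split_ifs <;> omega

lemma rev_self {V : Type*} [DecidableEq V] (w : List V) (hw : IsDOW w) (v : V) :
    fstIdx (reverseInterior w v) v = fstIdx w v ∧ sndIdx (reverseInterior w v) v = sndIdx w v := by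
  obtain ⟨v1, -⟩ := dow_idx w hw v
  obtain ⟨r1, r2⟩ := rev_idx w hw v v
  rw [r1, r2]
  simp [posMap]; omega

set_option linter.deprecated false in
set_option maxHeartbeats 8000000 in
lemma entry_eq {V : Type*} [DecidableEq V] (w : List V) (hw : IsDOW w) (v x : V)
    (p : V × Fin 3) :
    IASword (reverseInterior w v) x p =
      (rowSign w v x * IASword w x (najiPerm w v p)
        + rowMul w v x * IASword w v (najiPerm w v p)) * colSign w v p := by
  obtain ⟨u, i⟩ := p
  obtain ⟨v1, -⟩ := dow_idx w hw v
  obtain ⟨x1, -⟩ := dow_idx w hw x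
  obtain ⟨u1, -⟩ := dow_idx w hw u
  obtain ⟨rv1, rv2⟩ := rev_self w hw v
  have nxv := idx_ne_s11 w hw x v
  have nuv := idx_ne_s11 w hw u v
  have nxu := idx_ne_s11 w hw x u
  by_cases hu : u = v
  · subst hu
    by_cases hx : x = u
    · subst hx
      fin_cases i <;> simp [IASword, najiPerm, colSign, rowSign, rowMul]
    · specialize nxv hx
      clear nuv nxu
      rcases rev_cases w hw u x hx with ⟨⟨e1, e2⟩, o, e3, e4⟩ | ⟨⟨e1, e2⟩, o, e3, e4⟩ |
        ⟨⟨e1, e2⟩, o, e3, e4⟩ | ⟨⟨e1, e2⟩, o, e3, e4⟩ <;>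
      fin_cases i <;>
      simp [IASword, najiPerm, colSign, rowSign, rowMul, hx, e1, e2] <;>
      simp only [inInterior, rv1, rv2] <;> clear e1 e2 hw hx <;> split_ifs <;> omega
  · specialize nuv hu
    by_cases hx : x = v
    · subst hx
      clear nxu nxv
      have hu' : ¬ x = u := fun h => hu h.symm
      rcases rev_cases w hw x u hu with ⟨⟨e1, e2⟩, o, e3, e4⟩ | ⟨⟨e1, e2⟩, o, e3, e4⟩ |
        ⟨⟨e1, e2⟩, o, e3, e4⟩ | ⟨⟨e1, e2⟩, o, e3, e4⟩ <;>
      fin_cases i <;>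
      simp [IASword, najiPerm, colSign, rowSign, rowMul, hu, hu', e1, e2, exactlyOneIn, Xor'] <;>
      simp only [inInterior, rv1, rv2] <;> clear e1 e2 hw hu hu' <;> split_ifs <;> omega
    · specialize nxv hx
      have hu' : ¬ v = u := fun h => hu h.symm
      by_cases hxu : x = u
      · subst hxu
        clear nxu
        rcases rev_cases w hw v x hx with ⟨⟨e1, e2⟩, o, e3, e4⟩ | ⟨⟨e1, e2⟩, o, e3, e4⟩ |
          ⟨⟨e1, e2⟩, o, e3, e4⟩ | ⟨⟨e1, e2⟩, o, e3, e4⟩ <;>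
        fin_cases i <;>
        simp [IASword, najiPerm, colSign, rowSign, rowMul, hu, hu', e1, e2, exactlyOneIn, Xor'] <;>
        simp only [inInterior] <;> clear e1 e2 hw hu hu' hx <;> split_ifs <;> omega
      · specialize nxu hxu
        rcases rev_cases w hw v x hx with ⟨⟨f1, f2⟩, o', f3, f4⟩ | ⟨⟨f1, f2⟩, o', f3, f4⟩ |
          ⟨⟨f1, f2⟩, o', f3, f4⟩ | ⟨⟨f1, f2⟩, o', f3, f4⟩ <;>
        rcases rev_cases w hw v u hu with ⟨⟨e1, e2⟩, o, e3, e4⟩ | ⟨⟨e1, e2⟩, o, e3, e4⟩ |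
          ⟨⟨e1, e2⟩, o, e3, e4⟩ | ⟨⟨e1, e2⟩, o, e3, e4⟩ <;>
        fin_cases i <;>
        simp [IASword, najiPerm, colSign, rowSign, rowMul, hu, hu', hx, hxu, e1, e2, f1, f2,
          exactlyOneIn, Xor'] <;>
        simp only [inInterior] <;> clear e1 e2 f1 f2 hw hu hu' hx hxu <;> split_ifs <;> omega


/-- Reversing the interior of `v` changes `IAS_w` by unimodular integer row
operations, the column permutation `najiPerm`, and column sign changes:
`IAS_{w'} = U · (IAS_w ∘ π) · D` with `det U = ±1` and `D = diag(±1)`. -/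
theorem IASword_reverseInterior_equivalence
    {V : Type} [Fintype V] [DecidableEq V] (w : List V) (hw : IsDOW w) (v : V) :
    ∃ (U : Matrix V V ℤ) (d : V × Fin 3 → ℤ),
      (U.det = 1 ∨ U.det = -1) ∧ (∀ p, d p = 1 ∨ d p = -1) ∧
      IASword (reverseInterior w v)
        = U * (IASword w).submatrix id (najiPerm w v) * Matrix.diagonal d := by
  refine ⟨rowMat w v, colSign w v, ?_, ?_, ?_⟩
  · have h := congrArg Matrix.det (rowMat_sq w hw v)
    rw [Matrix.det_mul, Matrix.det_one] at h
    exact Int.isUnit_iff.1 (IsUnit.of_mul_eq_one _ h)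
  · intro p
    unfold colSign rowSign
    split_ifs <;> simp
  · ext x p
    rw [Matrix.mul_diagonal, rowMat_mul]
    exact entry_eq w hw v x p
end
end
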